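/- arXiv:1904.02179 — 2 statements merged into one kernel-verified Lean document; each statement's English description precedes it below -/
import Mathlib

section
/- Let (R,B) be an EIC problem with problem graph G=(V,E) in which every requested block is held by some node. Then the minimum over all neighborhood partitions {Ñ_1,…,Ñ_n} of Σ_{i=1}^n χ(Ḡ|_{Ñ_i}) equals the minimum size of a cover of V by neighborhood-cliques, i.e., the minimum cardinality of a subfamily of 𝒞 = {vertex set of C : C is a maximal clique of G|_{N_i} for some i ∈ [n]} whose union is V. -/
open Matrix BigOperators

namespace EIC

variable {n m : ℕ}

/-- The vertex set of the problem graph of the EIC problem `(R, B)`: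
one vertex for each requirement pair `(u, a)` with `R u a = 1`. -/
abbrev Vtx (R : Matrix (Fin n) (Fin m) (ZMod 2)) : Type :=
  {p : Fin n × Fin m // R p.1 p.2 = 1}

/-- `(R, B)` have disjoint supports: no position has both `B = 1` and `R = 1`. -/
def DisjointSupports (R B : Matrix (Fin n) (Fin m) (ZMod 2)) : Prop :=
  ∀ u a, ¬(B u a = 1 ∧ R u a = 1)

/-- The standard basis vector `e_a ∈ F_2^m`. -/
def e (m : ℕ) (a : Fin m) : Fin m → ZMod 2 := Pi.single a 1

/-- `β` (with rows indexed by `ι`) is a centralized linear broadcast solution to `(R, B)`: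
for every requirement pair `(u, a)` there is `α` with `e_a = α · [β ; diag(B_u)]`. -/
def IsCentralizedSolution (R B : Matrix (Fin n) (Fin m) (ZMod 2))
    {ι : Type} [Fintype ι] (β : Matrix ι (Fin m) (ZMod 2)) : Prop :=
  ∀ u a, R u a = 1 →
    ∃ α : ι ⊕ Fin m → ZMod 2,
      e m a = α ᵥ* Matrix.fromRows β (Matrix.diagonal (B u))

/-- `(C)_{(R,B)}`: the minimum length of a centralized linear broadcast solution. -/
noncomputable def Copt (R B : Matrix (Fin n) (Fin m) (ZMod 2)) : ℕ :=
  sInf {h | ∃ β : Matrix (Fin h) (Fin m) (ZMod 2), IsCentralizedSolution R B β}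

/-- The vertical concatenation of the matrices `β u`, `u ∈ [n]`. -/
def vconcat {h : Fin n → ℕ} (β : ∀ u : Fin n, Matrix (Fin (h u)) (Fin m) (ZMod 2)) :
    Matrix ((ℓ : Fin n) × Fin (h ℓ)) (Fin m) (ZMod 2) :=
  Matrix.of fun p => β p.1 p.2

/-- `β⁽¹⁾, …, β⁽ⁿ⁾` is a (decentralized) linear broadcast solution to `(R, B)`. -/
def IsBroadcastSolution (R B : Matrix (Fin n) (Fin m) (ZMod 2))
    {h : Fin n → ℕ} (β : ∀ u : Fin n, Matrix (Fin (h u)) (Fin m) (ZMod 2)) : Prop :=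
  (∀ u a, B u a = 0 → ∀ i, β u i a = 0) ∧
  ∀ u a, R u a = 1 →
    ∃ α : ((ℓ : Fin n) × Fin (h ℓ)) ⊕ Fin m → ZMod 2,
      e m a = α ᵥ* Matrix.fromRows (vconcat β) (Matrix.diagonal (B u))

/-- `(D)_{(R,B)}`: the minimum length of a decentralized linear broadcast solution. -/
noncomputable def Dopt (R B : Matrix (Fin n) (Fin m) (ZMod 2)) : ℕ :=
  sInf {s | ∃ (h : Fin n → ℕ) (β : ∀ u : Fin n, Matrix (Fin (h u)) (Fin m) (ZMod 2)),
    IsBroadcastSolution R B β ∧ ∑ u, h u = s}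

/-- A task-based solution: a linear broadcast solution where every requirement pair
`(u, a)` can be decoded from the broadcast of a single responsible sender `ℓ`. -/
def IsTaskBased (R B : Matrix (Fin n) (Fin m) (ZMod 2))
    {h : Fin n → ℕ} (β : ∀ u : Fin n, Matrix (Fin (h u)) (Fin m) (ZMod 2)) : Prop :=
  IsBroadcastSolution R B β ∧
  ∀ u a, R u a = 1 → ∃ ℓ : Fin n, ∃ α : Fin (h ℓ) ⊕ Fin m → ZMod 2,
    e m a = α ᵥ* Matrix.fromRows (β ℓ) (Matrix.diagonal (B u))

/-- `(T)_{(R,B)}`: the minimum length of a task-based solution. -/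
noncomputable def Topt (R B : Matrix (Fin n) (Fin m) (ZMod 2)) : ℕ :=
  sInf {s | ∃ (h : Fin n → ℕ) (β : ∀ u : Fin n, Matrix (Fin (h u)) (Fin m) (ZMod 2)),
    IsTaskBased R B β ∧ ∑ u, h u = s}

/-- The edge relation of the problem graph: for distinct requirement pairs `(u,a)`, `(w,b)`,
there is an edge from `v_{(u,a)}` to `v_{(w,b)}` iff `B u b = 1` or `a = b`. -/
def probEdge (R B : Matrix (Fin n) (Fin m) (ZMod 2)) (v w : Vtx R) : Prop :=
  v ≠ w ∧ (B v.1.1 w.1.2 = 1 ∨ v.1.2 = w.1.2)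

/-- A matrix `A` fits a directed graph with edge relation `E`. -/
def Fits {V : Type} (E : V → V → Prop) (A : Matrix V V (ZMod 2)) : Prop :=
  (∀ k, A k k = 1) ∧ ∀ k l, k ≠ l → ¬ E k l → A k l = 0

/-- `minrk₂`: the minimum `F₂`-rank of a matrix fitting the graph. -/
noncomputable def minrk {V : Type} [Fintype V] (E : V → V → Prop) : ℕ :=
  sInf {r | ∃ A : Matrix V V (ZMod 2), Fits E A ∧ A.rank = r}

/-- `rminrk₂`: the minimum `F₂`-rank of a matrix in `𝒜` fitting the graph. -/
noncomputable def rminrk {V : Type} [Fintype V] (E : V → V → Prop)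
    (𝒜 : Set (Matrix V V (ZMod 2))) : ℕ :=
  sInf {r | ∃ A ∈ 𝒜, Fits E A ∧ A.rank = r}

/-- The column repetition function `φ_{(R,B)}`: the column of `φ(A)` indexed by
`v_{(u,a)}` is the `a`-th column of `A`. -/
def phi (R : Matrix (Fin n) (Fin m) (ZMod 2))
    (A : Matrix (Vtx R) (Fin m) (ZMod 2)) : Matrix (Vtx R) (Vtx R) (ZMod 2) :=
  Matrix.of fun k v => A k v.1.2

/-- The sender neighborhood `N_u = {v_{(w,b)} ∈ V : B u b = 1}`. -/
def senderNbhd (R B : Matrix (Fin n) (Fin m) (ZMod 2)) (u : Fin n) : Set (Vtx R) :=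
  {v | B u v.1.2 = 1}

/-- A neighborhood partition `{Ñ_1, …, Ñ_n}`. -/
def IsNbhdPartition (R B : Matrix (Fin n) (Fin m) (ZMod 2))
    (N : Fin n → Set (Vtx R)) : Prop :=
  (∀ i, N i ⊆ senderNbhd R B i) ∧
  (∀ i j, i ≠ j → Disjoint (N i) (N j)) ∧
  (⋃ i, N i) = Set.univ

open Classical in
/-- `R^(i)`: the request matrix of the EIC subproblem induced by `Ñ_i`; it has ones
exactly at the requirement pairs whose vertex lies in `Ñ_i`. -/
noncomputable def Rsub (R : Matrix (Fin n) (Fin m) (ZMod 2))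
    (N : Fin n → Set (Vtx R)) (i : Fin n) : Matrix (Fin n) (Fin m) (ZMod 2) :=
  Matrix.of fun u a =>
    if hr : R u a = 1 then (if (⟨(u, a), hr⟩ : Vtx R) ∈ N i then 1 else 0) else 0

open Classical in
/-- `B^(i)`: the has-matrix of the EIC subproblem induced by `Ñ_i`; it agrees with `B`
on the columns of blocks requested in `Ñ_i` and is zero elsewhere. -/
noncomputable def Bsub (R B : Matrix (Fin n) (Fin m) (ZMod 2))
    (N : Fin n → Set (Vtx R)) (i : Fin n) : Matrix (Fin n) (Fin m) (ZMod 2) :=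
  Matrix.of fun u a => if ∃ v ∈ N i, v.1.2 = a then B u a else 0

/-- `Cl` is a clique for the edge relation `E`. -/
def IsClique {V : Type} (E : V → V → Prop) (Cl : Set V) : Prop :=
  ∀ k ∈ Cl, ∀ l ∈ Cl, k ≠ l → E k l

/-- `I` is an independent set for the edge relation `E` (no edge in either direction). -/
def IsIndep {V : Type} (E : V → V → Prop) (I : Set V) : Prop :=
  ∀ k ∈ I, ∀ l ∈ I, k ≠ l → ¬ E k l ∧ ¬ E l k

/-- `χ(Ḡ|_S)`: the minimum number of cliques of the induced subgraph `G|_S`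
needed to partition `S`. -/
noncomputable def cliqueCoverNum {V : Type} (E : V → V → Prop) (S : Set V) : ℕ :=
  sInf {t | ∃ Cl : Fin t → Set V, (∀ i, Cl i ⊆ S) ∧ (∀ i, IsClique E (Cl i)) ∧
    (∀ i j, i ≠ j → Disjoint (Cl i) (Cl j)) ∧ (⋃ i, Cl i) = S}

/-- `χ(G)`: the minimum number of independent sets of `G` needed to partition
its vertex set. -/
noncomputable def chromNum {V : Type} [Fintype V] (E : V → V → Prop) : ℕ :=
  sInf {t | ∃ I : Fin t → Set V, (∀ i, IsIndep E (I i)) ∧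
    (∀ i j, i ≠ j → Disjoint (I i) (I j)) ∧ (⋃ i, I i) = Set.univ}

/-- `ω(Ḡ|_S)`: the maximum size of an independent set of the induced subgraph `G|_S`. -/
noncomputable def indepNum {V : Type} (E : V → V → Prop) (S : Set V) : ℕ :=
  sSup {t | ∃ I ⊆ S, IsIndep E I ∧ I.ncard = t}

/-- The set of neighborhood-cliques: vertex sets of maximal cliques of the induced
subgraphs `G|_{N_i}`, over all senders `i`. -/
def nbhdCliques (R B : Matrix (Fin n) (Fin m) (ZMod 2)) : Set (Set (Vtx R)) :=
  {Cl | ∃ i : Fin n, Cl ⊆ senderNbhd R B i ∧ IsClique (probEdge R B) Cl ∧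
    ∀ Cl', Cl ⊆ Cl' → Cl' ⊆ senderNbhd R B i → IsClique (probEdge R B) Cl' → Cl' = Cl}

theorem ccn_le {V : Type} (E : V → V → Prop) (S : Set V) {ι : Type} [Fintype ι]
    (Cl : ι → Set V) (h1 : ∀ i, Cl i ⊆ S) (h2 : ∀ i, IsClique E (Cl i))
    (h3 : ∀ i j, i ≠ j → Disjoint (Cl i) (Cl j)) (h4 : (⋃ i, Cl i) = S) :
    cliqueCoverNum E S ≤ Fintype.card ι := by
  apply Nat.sInf_le
  let q := (Fintype.equivFin ι).symm
  refine ⟨fun k => Cl (q k), fun k => h1 _, fun k => h2 _, fun i j hij => h3 _ _ ?_, ?_⟩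
  · exact fun h => hij (q.injective h)
  · rw [← h4]
    exact q.surjective.iUnion_comp Cl

theorem ccn_spec {V : Type} [Finite V] (E : V → V → Prop) (S : Set V) :
    ∃ Cl : Fin (cliqueCoverNum E S) → Set V, (∀ i, Cl i ⊆ S) ∧ (∀ i, IsClique E (Cl i)) ∧
    (∀ i j, i ≠ j → Disjoint (Cl i) (Cl j)) ∧ (⋃ i, Cl i) = S := by
  have hne : {t | ∃ Cl : Fin t → Set V, (∀ i, Cl i ⊆ S) ∧ (∀ i, IsClique E (Cl i)) ∧
    (∀ i j, i ≠ j → Disjoint (Cl i) (Cl j)) ∧ (⋃ i, Cl i) = S}.Nonempty := by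
    obtain ⟨k, ⟨q⟩⟩ := Finite.exists_equiv_fin S
    refine ⟨k, fun i => {(q.symm i : V)}, ?_, ?_, ?_, ?_⟩
    · intro i
      simp
    · intro i a ha b hb hab
      exact absurd (ha.trans hb.symm) hab
    · intro i j hij
      rw [Set.disjoint_singleton]
      exact fun h => hij (q.symm.injective (Subtype.ext h))
    · ext x
      simp only [Set.mem_iUnion, Set.mem_singleton_iff]
      constructor
      · rintro ⟨i, rfl⟩
        exact (q.symm i).2
      · intro hx
        exact ⟨q ⟨x, hx⟩, by simp⟩
  exact Nat.sInf_mem hne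

theorem extend_clique {n m : ℕ} (R B : Matrix (Fin n) (Fin m) (ZMod 2)) (i : Fin n)
    (C : Set (Vtx R)) (h1 : C ⊆ senderNbhd R B i) (h2 : IsClique (probEdge R B) C) :
    ∃ M ∈ nbhdCliques R B, C ⊆ M := by
  obtain ⟨M, hCM, hM⟩ := Set.Finite.exists_le_maximal
    (Set.toFinite {D : Set (Vtx R) | D ⊆ senderNbhd R B i ∧ IsClique (probEdge R B) D})
    (show C ∈ _ from ⟨h1, h2⟩)
  refine ⟨M, ⟨i, hM.prop.1, hM.prop.2, ?_⟩, hCM⟩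
  intro D hMD hD1 hD2
  exact (hM.eq_of_subset ⟨hD1, hD2⟩ hMD).symm

theorem dirA {n m : ℕ} (R B : Matrix (Fin n) (Fin m) (ZMod 2))
    (N : Fin n → Set (Vtx R)) (hN : IsNbhdPartition R B N) :
    ∃ F : Set (Set (Vtx R)), F ⊆ nbhdCliques R B ∧
        ⋃₀ F = Set.univ ∧ F.ncard ≤ ∑ i, cliqueCoverNum (probEdge R B) (N i) := by
  choose Cl h1 h2 h3 h4 using fun i => ccn_spec (probEdge R B) (N i)
  choose M hM hCM using fun i j =>
    extend_clique R B i (Cl i j) ((h1 i j).trans (hN.1 i)) (h2 i j)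
  let f : ((i : Fin n) × Fin (cliqueCoverNum (probEdge R B) (N i))) → Set (Vtx R) :=
    fun p => M p.1 p.2
  refine ⟨Set.range f, ?_, ?_, ?_⟩
  · rintro _ ⟨p, rfl⟩
    exact hM _ _
  · rw [Set.eq_univ_iff_forall]
    intro v
    have hv : v ∈ ⋃ i, N i := by rw [hN.2.2]; trivial
    obtain ⟨i, hi⟩ := Set.mem_iUnion.1 hv
    rw [← h4 i] at hi
    obtain ⟨j, hj⟩ := Set.mem_iUnion.1 hi
    exact ⟨M i j, ⟨⟨i, j⟩, rfl⟩, hCM i j hj⟩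
  · have : (Set.range f).ncard ≤
        Nat.card ((i : Fin n) × Fin (cliqueCoverNum (probEdge R B) (N i))) := by
      rw [← Set.image_univ, ← Set.ncard_univ]
      exact Set.ncard_image_le
    simpa using this

theorem dirB {n m : ℕ} (R B : Matrix (Fin n) (Fin m) (ZMod 2))
    (F : Set (Set (Vtx R))) (hF : F ⊆ nbhdCliques R B) (hU : ⋃₀ F = Set.univ) :
    ∃ N : Fin n → Set (Vtx R), IsNbhdPartition R B N ∧
      ∑ i, cliqueCoverNum (probEdge R B) (N i) ≤ F.ncard := by
  classical
  choose s hs1 hs2 _ using fun C : F => hF C.2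
  have hg : ∀ v : Vtx R, ∃ C : F, v ∈ C.1 := by
    intro v
    have hv : v ∈ ⋃₀ F := by rw [hU]; trivial
    obtain ⟨C, hC, hvC⟩ := hv
    exact ⟨⟨C, hC⟩, hvC⟩
  choose g hg using hg
  haveI : Fintype F := Fintype.ofFinite F
  refine ⟨fun i => {v | s (g v) = i}, ⟨?_, ?_, ?_⟩, ?_⟩
  · rintro i v rfl
    exact hs1 _ (hg v)
  · intro i j hij
    rw [Set.disjoint_left]
    rintro v rfl h
    exact hij h
  · ext v
    simp
  · have key : ∀ i, cliqueCoverNum (probEdge R B) {v | s (g v) = i} ≤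
        Fintype.card {C : F // s C = i} := by
      intro i
      apply ccn_le _ _ (fun C : {C : F // s C = i} => {v | g v = C.1})
      · rintro ⟨C, rfl⟩ v hv
        exact congrArg s hv
      · rintro ⟨C, rfl⟩ a ha b hb hab
        have ha : g a = C := ha
        have hb : g b = C := hb
        exact hs2 C a (ha ▸ hg a) b (hb ▸ hg b) hab
      · rintro C D hCD
        rw [Set.disjoint_left]
        intro v h1 h2
        exact hCD (Subtype.ext (h1.symm.trans h2))
      · ext v
        simp
    refine (Finset.sum_le_sum fun i _ => key i).trans ?_
    rw [← Fintype.card_sigma, Fintype.card_congr (Equiv.sigmaFiberEquiv s),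
      ← Nat.card_coe_set_eq, Nat.card_eq_fintype_card]

theorem min_partition_chrom_eq_min_cover {n m : ℕ}
    (R B : Matrix (Fin n) (Fin m) (ZMod 2)) (hdisj : DisjointSupports R B)
    (hheld : ∀ u a, R u a = 1 → ∃ w, B w a = 1) :
    sInf {s | ∃ N : Fin n → Set (Vtx R), IsNbhdPartition R B N ∧
        s = ∑ i, cliqueCoverNum (probEdge R B) (N i)} =
    sInf {t | ∃ F : Set (Set (Vtx R)), F ⊆ nbhdCliques R B ∧
        ⋃₀ F = Set.univ ∧ F.ncard = t} := by
  have hA : {s | ∃ N : Fin n → Set (Vtx R), IsNbhdPartition R B N ∧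
        s = ∑ i, cliqueCoverNum (probEdge R B) (N i)}.Nonempty := by
    choose w hw using fun v : Vtx R => hheld v.1.1 v.1.2 v.2
    refine ⟨_, fun i => {v | w v = i}, ⟨?_, ?_, ?_⟩, rfl⟩
    · rintro i v rfl
      exact hw v
    · intro i j hij
      rw [Set.disjoint_left]
      rintro v rfl h
      exact hij h
    · ext v
      simp
  have hB : {t | ∃ F : Set (Set (Vtx R)), F ⊆ nbhdCliques R B ∧
        ⋃₀ F = Set.univ ∧ F.ncard = t}.Nonempty := by
    obtain ⟨_, N, hN, _⟩ := hA
    obtain ⟨F, h1, h2, _⟩ := dirA R B N hN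
    exact ⟨_, F, h1, h2, rfl⟩
  apply le_antisymm
  · obtain ⟨F, h1, h2, h3⟩ := Nat.sInf_mem hB
    rw [← h3]
    obtain ⟨N, hN, hle⟩ := dirB R B F h1 h2
    refine le_trans (Nat.sInf_le ?_) hle
    exact ⟨N, hN, rfl⟩
  · obtain ⟨N, hN, h3⟩ := Nat.sInf_mem hA
    rw [h3]
    obtain ⟨F, h1, h2, hle⟩ := dirA R B N hN
    refine le_trans (Nat.sInf_le ?_) hle
    exact ⟨F, h1, h2, rfl⟩

end EIC
end

section
/- Let (R,B) be a single unicast EIC problem, i.e., every row of R has exactly one nonzero entry and every column of R has exactly one nonzero entry (so n = m), and let G be its problem graph. Then the minimum length of a centralized linear broadcast solution equals the minrank: (C)_{(R,B)} = minrk_2(G). -/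
open Matrix BigOperators

namespace EIC

variable {n m : ℕ}

/-- Rank factorization through the row space. -/
theorem exists_rank_factor {V W : Type} [Fintype V] [Fintype W] (A : Matrix V W (ZMod 2)) :
    ∃ (C : Matrix V (Fin A.rank) (ZMod 2)) (D : Matrix (Fin A.rank) W (ZMod 2)), A = C * D := by
  let b := Module.finBasisOfFinrankEq (ZMod 2)
    (Submodule.span (ZMod 2) (Set.range A.row)) A.rank_eq_finrank_span_row.symm
  have hmem : ∀ k, A.row k ∈ Submodule.span (ZMod 2) (Set.range A.row) :=
    fun k => Submodule.subset_span ⟨k, rfl⟩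
  refine ⟨Matrix.of fun k i => b.repr ⟨A.row k, hmem k⟩ i,
    Matrix.of fun i l => (b i : W → ZMod 2) l, ?_⟩
  ext k l
  have h := congrArg (fun x : Submodule.span (ZMod 2) (Set.range A.row) => (x : W → ZMod 2) l)
    (b.sum_repr ⟨A.row k, hmem k⟩)
  simp only [Submodule.coe_sum, Submodule.coe_smul, Finset.sum_apply, Pi.smul_apply,
    smul_eq_mul] at h
  simp only [Matrix.mul_apply, Matrix.of_apply]
  exact h.symm

theorem zmod2_ne_one {x : ZMod 2} (h : x ≠ 1) : x = 0 := by
  revert h; revert x; decide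

theorem decode_apply {ι : Type} [Fintype ι] (β : Matrix ι (Fin m) (ZMod 2))
    (α : ι ⊕ Fin m → ZMod 2) (d : Fin m → ZMod 2) (b : Fin m) :
    (α ᵥ* Matrix.fromRows β (Matrix.diagonal d)) b =
      (∑ i, α (Sum.inl i) * β i b) + α (Sum.inr b) * d b := by
  simp [Matrix.vecMul, dotProduct, Matrix.diagonal_apply]

theorem vtx_ext {R : Matrix (Fin n) (Fin m) (ZMod 2)} (hcol : ∀ a, ∃! u, R u a = 1)
    (k l : Vtx R) (h : k.1.2 = l.1.2) : k = l := by
  obtain ⟨⟨u, a⟩, hk⟩ := k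
  obtain ⟨⟨w, b⟩, hl⟩ := l
  simp only at h hk hl
  subst h
  have := (hcol a).unique hk hl
  subst this
  rfl

theorem solution_of_fits {R B : Matrix (Fin n) (Fin m) (ZMod 2)} 
    (hcol : ∀ a, ∃! u, R u a = 1)
    (A : Matrix (Vtx R) (Vtx R) (ZMod 2)) (hA : Fits (probEdge R B) A) :
    ∃ β : Matrix (Fin A.rank) (Fin m) (ZMod 2), IsCentralizedSolution R B β := by
  obtain ⟨C, D, hCD⟩ := exists_rank_factor A
  choose g hg using fun a => (hcol a).exists
  let G : Fin m → Vtx R := fun b => ⟨(g b, b), hg b⟩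
  refine ⟨Matrix.of fun i b => D i (G b), ?_⟩
  intro u a hua
  let k : Vtx R := ⟨(u, a), hua⟩
  refine ⟨Sum.elim (fun i => C k i) (fun b => if b = a then 0 else A k (G b)), ?_⟩
  ext b
  rw [decode_apply]
  have hsum : (∑ i, C k i * D i (G b)) = A k (G b) := by
    conv_rhs => rw [hCD]
    rw [Matrix.mul_apply]
  simp only [Sum.elim_inl, Sum.elim_inr, Matrix.of_apply, hsum]
  by_cases hb : b = a
  · subst hb
    have : G b = k := vtx_ext hcol _ _ rfl
    simp [e, this, hA.1 k]
  · have hne : k ≠ G b := fun h => hb (congrArg (fun v : Vtx R => v.1.2) h).symm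
    simp only [e, hb, if_false, ne_eq, not_false_eq_true, Pi.single_eq_of_ne]
    by_cases hB : B u b = 1
    · rw [hB, mul_one, CharTwo.add_self_eq_zero]
    · have h0 : A k (G b) = 0 := by
        refine hA.2 k (G b) hne ?_
        rintro ⟨-, h | h⟩
        · exact hB h
        · exact hb h.symm
      simp [h0]

theorem fits_of_solution {R B : Matrix (Fin n) (Fin m) (ZMod 2)}
    (hcol : ∀ a, ∃! u, R u a = 1) (hdisj : DisjointSupports R B)
    {h : ℕ} (β : Matrix (Fin h) (Fin m) (ZMod 2)) (hβ : IsCentralizedSolution R B β) :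
    ∃ A : Matrix (Vtx R) (Vtx R) (ZMod 2), Fits (probEdge R B) A ∧ A.rank ≤ h := by
  have hβ' : ∀ k : Vtx R, ∃ α : Fin h ⊕ Fin m → ZMod 2,
      e m k.1.2 = α ᵥ* Matrix.fromRows β (Matrix.diagonal (B k.1.1)) :=
    fun k => hβ _ _ k.2
  choose α hα using hβ'
  let C : Matrix (Vtx R) (Fin h) (ZMod 2) := Matrix.of fun k i => α k (Sum.inl i)
  let D : Matrix (Fin h) (Vtx R) (ZMod 2) := Matrix.of fun i l => β i l.1.2
  have key : ∀ k l : Vtx R, B k.1.1 l.1.2 ≠ 1 → (C * D) k l = e m k.1.2 l.1.2 := by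
    intro k l hB
    rw [hα k, decode_apply, zmod2_ne_one hB, mul_zero, add_zero, Matrix.mul_apply]
    rfl
  refine ⟨C * D, ⟨?_, ?_⟩, ?_⟩
  · intro k
    rw [key k k fun hB => hdisj _ _ ⟨hB, k.2⟩]
    simp [e]
  · intro k l hkl hE
    rw [key k l fun hB => hE ⟨hkl, Or.inl hB⟩]
    have : l.1.2 ≠ k.1.2 := fun h => hkl (vtx_ext hcol k l h.symm)
    simp [e, this]
  · exact (Matrix.rank_mul_le_left C D).trans (by simpa using C.rank_le_card_width)

theorem single_unicast_centralized_eq_minrk {n m : ℕ}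
    (R B : Matrix (Fin n) (Fin m) (ZMod 2)) (hdisj : DisjointSupports R B)
    (hrow : ∀ u, ∃! a, R u a = 1) (hcol : ∀ a, ∃! u, R u a = 1) :
    Copt R B = minrk (probEdge R B) := by
  apply le_antisymm
  · have hne : {r | ∃ A : Matrix (Vtx R) (Vtx R) (ZMod 2),
        Fits (probEdge R B) A ∧ A.rank = r}.Nonempty :=
      ⟨_, 1, ⟨fun k => by simp, fun k l hkl _ => by simp [hkl]⟩, rfl⟩
    obtain ⟨A, hA, hr⟩ := Nat.sInf_mem hne
    unfold minrk
    rw [← hr]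
    exact Nat.sInf_le (solution_of_fits hcol A hA)
  · have hne : {h | ∃ β : Matrix (Fin h) (Fin m) (ZMod 2),
        IsCentralizedSolution R B β}.Nonempty :=
      ⟨_, solution_of_fits hcol 1
        ⟨fun k => by simp, fun k l hkl _ => by simp [hkl]⟩⟩
    obtain ⟨β, hβ⟩ := Nat.sInf_mem hne
    obtain ⟨A, hA, hr⟩ := fits_of_solution hcol hdisj β hβ
    have hle : minrk (probEdge R B) ≤ A.rank := Nat.sInf_le ⟨A, hA, rfl⟩
    exact hle.trans hr

end EIC
end
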